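/- arXiv:2011.13094 — 2 statements merged into one kernel-verified Lean document; each statement's English description precedes it below -/
import Mathlib

section
/- Let T be a positive integer, v > 0, γ ∈ ℝ, and let r₁,…,r_T, β₁,…,β_T, σ₁,…,σ_T be real numbers satisfying: σ_t ≥ 0 and σ_t² ≤ v for all t; 0 ≤ β_t ≤ β_T for all t; r_t ≤ 2·β_t·σ_t for all t; and (1/2)·Σ_{t=1}^T log(1 + σ_t²/v) ≤ γ. Then the cumulative regret satisfies Σ_{t=1}^T r_t ≤ 4·β_T·√(v · T · γ). -/
/-- Cumulative regret bound via the information-gain term: if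
`r t ≤ 2·β t·σ t`, `0 ≤ σ t`, `σ t ² ≤ v`, `0 ≤ β t ≤ β T`, and
`(1/2)·∑ log(1 + σ t ²/v) ≤ γ`, then `∑ r t ≤ 4·β T·√(v·T·γ)`. -/
theorem stmt_10 (T : ℕ) (hT : 0 < T) (v γ : ℝ) (hv : 0 < v)
    (r β σ : ℕ → ℝ)
    (hσ : ∀ t ∈ Finset.Icc 1 T, 0 ≤ σ t ∧ σ t ^ 2 ≤ v)
    (hβ : ∀ t ∈ Finset.Icc 1 T, 0 ≤ β t ∧ β t ≤ β T)
    (hr : ∀ t ∈ Finset.Icc 1 T, r t ≤ 2 * β t * σ t)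
    (hγ : (1 / 2 : ℝ) * ∑ t ∈ Finset.Icc 1 T, Real.log (1 + σ t ^ 2 / v) ≤ γ) :
    ∑ t ∈ Finset.Icc 1 T, r t ≤ 4 * β T * Real.sqrt (v * T * γ) := by
  have hlog : ∀ t ∈ Finset.Icc 1 T, σ t ^ 2 ≤ 2 * v * Real.log (1 + σ t ^ 2 / v) := by
    intro t ht
    have h1 := (hσ t ht).2
    have hx0 : 0 ≤ σ t ^ 2 / v := by positivity
    have hx1 : σ t ^ 2 / v ≤ 1 := (div_le_one hv).2 h1
    have hs : σ t ^ 2 = v * (σ t ^ 2 / v) := by field_simp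
    generalize σ t ^ 2 / v = x at *
    have h2 := Real.one_sub_inv_le_log_of_pos (show 0 < 1 + x by linarith)
    have h3 : x / 2 ≤ 1 - (1 + x)⁻¹ := by
      have : 1 - (1 + x)⁻¹ = x / (1 + x) := by
        have : 1 + x ≠ 0 := by linarith
        field_simp
        ring
      rw [this]
      exact div_le_div_of_nonneg_left hx0 (by linarith) (by linarith)
    rw [hs]
    nlinarith
  have hsum : ∑ t ∈ Finset.Icc 1 T, σ t ^ 2 ≤ 4 * v * γ := by
    have h := Finset.sum_le_sum hlog
    rw [← Finset.mul_sum] at h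
    nlinarith
  have hcs : (∑ t ∈ Finset.Icc 1 T, σ t) ^ 2 ≤ T * ∑ t ∈ Finset.Icc 1 T, σ t ^ 2 := by
    have h := sq_sum_le_card_mul_sum_sq (s := Finset.Icc 1 T) (f := σ)
    simpa using h
  have hTr : (0 : ℝ) ≤ T := Nat.cast_nonneg T
  have hS : (∑ t ∈ Finset.Icc 1 T, σ t) / 2 ≤ Real.sqrt (v * T * γ) := by
    apply Real.le_sqrt_of_sq_le
    have := mul_le_mul_of_nonneg_left hsum hTr
    nlinarith
  have hβT : 0 ≤ β T := (hβ T (Finset.mem_Icc.2 ⟨hT, le_rfl⟩)).1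
  have hR : ∑ t ∈ Finset.Icc 1 T, r t ≤ 2 * β T * ∑ t ∈ Finset.Icc 1 T, σ t := by
    rw [Finset.mul_sum]
    refine Finset.sum_le_sum fun t ht => (hr t ht).trans ?_
    have := mul_le_mul_of_nonneg_right (hβ t ht).2 (hσ t ht).1
    linarith
  have := mul_le_mul_of_nonneg_left hS hβT
  linarith
end

section
/- Let T and N be positive integers, v > 0, k_max > 0 with 2πe·k_max ≥ 1, and let Σ be an N×N real symmetric positive semidefinite matrix with diagonal entries Σ_ii ≤ k_max. Let r₁,…,r_T, β₁,…,β_T, σ₁,…,σ_T be real numbers satisfying: σ_t ≥ 0 and σ_t² ≤ v for all t; 0 ≤ β_t ≤ β_T for all t; r_t ≤ 2·β_t·σ_t for all t; and (1/2)·Σ_{t=1}^T log(1 + σ_t²/v) ≤ (1/2)·log((2πe)^N · det(Σ)). Then the cumulative regret satisfies Σ_{t=1}^T r_t ≤ 4·β_T·√(v · N · T · log(2πe·k_max)). -/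
/-- Deterministic core of the main cumulative regret bound: combining the
instantaneous regret bounds `r t ≤ 2·β t·σ t`, the information-gain bound by the Gaussian
entropy `(1/2)·log((2πe)^N·det S)`, and Hadamard's inequality for the positive
semidefinite covariance matrix `S` with diagonal bounded by `k_max`, one gets
`∑ r t ≤ 4·β T·√(v·N·T·log(2πe·k_max))`. -/
theorem stmt_11 (T N : ℕ) (hT : 0 < T) (hN : 0 < N) (v : ℝ) (hv : 0 < v)
    (kmax : ℝ) (hk : 0 < kmax) (hke : 1 ≤ 2 * Real.pi * Real.exp 1 * kmax)
    (S : Matrix (Fin N) (Fin N) ℝ) (hS : S.PosSemidef)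
    (hdiag : ∀ i : Fin N, S i i ≤ kmax)
    (r β σ : ℕ → ℝ)
    (hσ : ∀ t ∈ Finset.Icc 1 T, 0 ≤ σ t ∧ σ t ^ 2 ≤ v)
    (hβ : ∀ t ∈ Finset.Icc 1 T, 0 ≤ β t ∧ β t ≤ β T)
    (hr : ∀ t ∈ Finset.Icc 1 T, r t ≤ 2 * β t * σ t)
    (hγ : (1 / 2 : ℝ) * ∑ t ∈ Finset.Icc 1 T, Real.log (1 + σ t ^ 2 / v)
      ≤ (1 / 2 : ℝ) * Real.log ((2 * Real.pi * Real.exp 1) ^ N * S.det)) :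
    ∑ t ∈ Finset.Icc 1 T, r t
      ≤ 4 * β T * Real.sqrt (v * N * T * Real.log (2 * Real.pi * Real.exp 1 * kmax)) := by
  have hc : 0 < 2 * Real.pi * Real.exp 1 := by positivity
  set c := 2 * Real.pi * Real.exp 1 with hcdef
  have hL : 0 ≤ Real.log (c * kmax) := Real.log_nonneg hke
  set L := Real.log (c * kmax) with hLdef
  -- entropy bound via log x ≤ x - 1 on the eigenvalues
  have hdet : Real.log (c ^ N * S.det) ≤ N * L := by
    by_cases h0 : S.det = 0
    · rw [h0]; simp; positivity
    have hprod : S.det = ∏ i, hS.isHermitian.eigenvalues i := by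
      simpa using hS.isHermitian.det_eq_prod_eigenvalues
    have htr : S.trace = ∑ i, hS.isHermitian.eigenvalues i := by
      simpa using hS.isHermitian.trace_eq_sum_eigenvalues
    have hne : ∀ i, hS.isHermitian.eigenvalues i ≠ 0 := by
      intro i hi
      exact h0 (hprod.trans (Finset.prod_eq_zero (Finset.mem_univ i) hi))
    have hpos : ∀ i, 0 < hS.isHermitian.eigenvalues i := fun i =>
      lt_of_le_of_ne (hS.eigenvalues_nonneg i) (hne i).symm
    have htrle : S.trace ≤ N * kmax := by
      have : S.trace ≤ ∑ _i : Fin N, kmax := Finset.sum_le_sum fun i _ => hdiag i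
      simpa using this
    have hi : ∀ i, Real.log (hS.isHermitian.eigenvalues i)
        ≤ Real.log kmax + (hS.isHermitian.eigenvalues i / kmax - 1) := by
      intro i
      have := Real.log_le_sub_one_of_pos (div_pos (hpos i) hk)
      rw [Real.log_div (hne i) hk.ne'] at this
      linarith
    have hsum : ∑ i, Real.log (hS.isHermitian.eigenvalues i)
        ≤ N * Real.log kmax + (S.trace / kmax - N) := by
      refine (Finset.sum_le_sum fun i _ => hi i).trans (le_of_eq ?_)
      rw [Finset.sum_add_distrib, Finset.sum_sub_distrib, ← Finset.sum_div, ← htr]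
      simp
    have hq : S.trace / kmax ≤ N := (div_le_iff₀ hk).2 htrle
    rw [Real.log_mul (by positivity) h0, Real.log_pow, hprod,
      Real.log_prod (fun i _ => hne i), hLdef, Real.log_mul hc.ne' hk.ne']
    linarith
  have hlog : ∀ t ∈ Finset.Icc 1 T, σ t ^ 2 ≤ 2 * v * Real.log (1 + σ t ^ 2 / v) := by
    intro t ht
    obtain ⟨h1, h2⟩ := hσ t ht
    have hx0 : 0 ≤ σ t ^ 2 / v := by positivity
    have hx1 : σ t ^ 2 / v ≤ 1 := (div_le_one hv).2 h2
    have h3 := Real.le_log_one_add_of_nonneg hx0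
    have h4 : σ t ^ 2 / v / 2 ≤ 2 * (σ t ^ 2 / v) / (σ t ^ 2 / v + 2) := by
      rw [div_le_div_iff₀ (by norm_num) (by linarith)]
      nlinarith
    have h5 : σ t ^ 2 = 2 * v * (σ t ^ 2 / v / 2) := by field_simp
    calc σ t ^ 2 = 2 * v * (σ t ^ 2 / v / 2) := h5
      _ ≤ _ := by gcongr; exact h4.trans h3
  have hsq : ∑ t ∈ Finset.Icc 1 T, σ t ^ 2 ≤ 2 * v * (N * L) := by
    refine (Finset.sum_le_sum hlog).trans ?_
    rw [← Finset.mul_sum]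
    gcongr
    linarith
  have hcs : (∑ t ∈ Finset.Icc 1 T, σ t) ^ 2 ≤ T * ∑ t ∈ Finset.Icc 1 T, σ t ^ 2 := by
    simpa using sq_sum_le_card_mul_sum_sq (s := Finset.Icc 1 T) (f := σ)
  have hX : 0 ≤ v * N * T * L := by positivity
  have hσsum : ∑ t ∈ Finset.Icc 1 T, σ t ≤ 2 * Real.sqrt (v * N * T * L) := by
    refine (abs_le_of_sq_le_sq' ?_ (by positivity)).2
    rw [mul_pow, Real.sq_sqrt hX]
    have : (T : ℝ) * ∑ t ∈ Finset.Icc 1 T, σ t ^ 2 ≤ T * (2 * v * (N * L)) := by gcongr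
    nlinarith
  have hβT : 0 ≤ β T := (hβ T (Finset.mem_Icc.2 ⟨hT, le_rfl⟩)).1
  calc ∑ t ∈ Finset.Icc 1 T, r t ≤ ∑ t ∈ Finset.Icc 1 T, 2 * β T * σ t := by
        refine Finset.sum_le_sum fun t ht => (hr t ht).trans ?_
        have := (hσ t ht).1
        have := (hβ t ht).2
        gcongr
    _ = 2 * β T * ∑ t ∈ Finset.Icc 1 T, σ t := by rw [Finset.mul_sum]
    _ ≤ 2 * β T * (2 * Real.sqrt (v * N * T * L)) := by gcongr
    _ = _ := by ring
end
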